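/- Let 𝒰 ⊆ B(K₁,L₁) and 𝒱 ⊆ B(H₂,K₂) be ternary rings of operators, let n ∈ ℕ and u₁,…,uₙ ∈ 𝒰, v₁,…,vₙ ∈ 𝒱. Then the supremum of ‖Σ_{i=1}^n φ(u_i) ψ(v_i)‖ over all complex Hilbert spaces H, K, L and all semi-commuting pairs of ternary morphisms φ : 𝒰 → B(K,L), ψ : 𝒱 → B(H,K), equals the supremum of ‖Σ_{i=1}^n φ'(u_i) ψ'(v_i)‖ over all complex Hilbert spaces H' and all commuting pairs of ternary morphisms φ' : 𝒰 → B(H'), ψ' : 𝒱 → B(H'), where a pair (φ',ψ') into B(H') is commuting if φ'(u)ψ'(v) = ψ'(v)φ'(u) and φ'(u)ψ'(v)* = ψ'(v)*φ'(u) for all u ∈ 𝒰, v ∈ 𝒱. (In other words, the maximal tensor norm of TROs coincides with the norm defined via commuting pairs.) -/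

import Mathlib

open ContinuousLinearMap

universe u

/-- A bundled complex Hilbert space. -/
structure HilbertC : Type (u + 1) where
  carrier : Type u
  [nacg : NormedAddCommGroup carrier]
  [ips : InnerProductSpace ℂ carrier]
  [cs : CompleteSpace carrier]

attribute [instance] HilbertC.nacg HilbertC.ips HilbertC.cs

/-- A linear map `φ` on a TRO `𝒰 ⊆ B(K₀, L₀)` is a ternary morphism if it
satisfies `φ(S T* R) = φ(S) φ(T)* φ(R)` for all `S, T, R ∈ 𝒰`. -/
def IsTernaryHom
    {K₀ L₀ K L : Type*}
    [NormedAddCommGroup K₀] [InnerProductSpace ℂ K₀] [CompleteSpace K₀]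
    [NormedAddCommGroup L₀] [InnerProductSpace ℂ L₀] [CompleteSpace L₀]
    [NormedAddCommGroup K] [InnerProductSpace ℂ K] [CompleteSpace K]
    [NormedAddCommGroup L] [InnerProductSpace ℂ L] [CompleteSpace L]
    (𝒰 : Submodule ℂ (K₀ →L[ℂ] L₀)) (φ : ↥𝒰 →ₗ[ℂ] (K →L[ℂ] L)) : Prop :=
  ∀ (s t r : 𝒰)
    (h : (s : K₀ →L[ℂ] L₀) ∘L (adjoint (t : K₀ →L[ℂ] L₀)) ∘L (r : K₀ →L[ℂ] L₀) ∈ 𝒰),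
    φ ⟨(s : K₀ →L[ℂ] L₀) ∘L (adjoint (t : K₀ →L[ℂ] L₀)) ∘L (r : K₀ →L[ℂ] L₀), h⟩
      = φ s ∘L (adjoint (φ t)) ∘L φ r

section aux
variable {K L H : Type*} 
    [NormedAddCommGroup K] [InnerProductSpace ℂ K] [CompleteSpace K]
    [NormedAddCommGroup L] [InnerProductSpace ℂ L] [CompleteSpace L]
    [NormedAddCommGroup H] [InnerProductSpace ℂ H] [CompleteSpace H]

lemma tro_sqrt (Q : K →L[ℂ] K) (hQ : 0 ≤ Q) : ∃ x : K →L[ℂ] K, adjoint x = x ∧ x * x = Q ∧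
    ∀ n, Commute n Q → Commute n x := by
  refine ⟨CFC.sqrt Q, ?_, CFC.sqrt_mul_sqrt_self Q hQ, ?_⟩
  · exact (IsSelfAdjoint.of_nonneg (CFC.sqrt_nonneg Q)).star_eq
  · intro n hn
    rw [CFC.sqrt]
    exact (Commute.cfcₙ_nnreal hn.symm _).symm

lemma tro_mat_sqrt {ι : Type*} [Fintype ι] (S : ι → K →L[ℂ] H) :
    ∃ x : ι → ι → K →L[ℂ] K, (∀ a b, ∑ c, adjoint (x c a) * x c b = adjoint (S a) ∘L S b) ∧
      ∀ n : K →L[ℂ] K, (∀ a b, Commute n (adjoint (S a) ∘L S b)) → ∀ c a, Commute n (x c a) := by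
  classical
  let P : ι → PiLp 2 (fun _ : ι => K) →L[ℂ] K := fun a => PiLp.proj 2 (fun _ : ι => K) a
  have hPE : ∀ a b, P a ∘L adjoint (P b) = if a = b then 1 else 0 := by
    intro a b
    ext1 k
    refine ext_inner_left ℂ fun k' => ?_
    have : ∀ z, inner ℂ z (adjoint (P b) k) = inner ℂ (z b) k := by
      intro z
      rw [adjoint_inner_right]; rfl
    have h2 : adjoint (P b) k = PiLp.single 2 b k := by
      refine ext_inner_left ℂ fun z => ?_
      rw [this]
      rw [PiLp.inner_apply, Finset.sum_eq_single b] <;> simp +contextual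
    simp only [coe_comp, Function.comp_apply, h2]
    by_cases h : a = b
    · subst h; simp [P]
    · simp [P, h]
  have hsum : ∑ a, adjoint (P a) ∘L P a = 1 := by
    ext1 z
    refine ext_inner_left ℂ fun k' => ?_
    simp only [sum_apply, coe_comp, Function.comp_apply, inner_sum, adjoint_inner_right]
    simp [PiLp.inner_apply, P]
  let R : PiLp 2 (fun _ : ι => K) →L[ℂ] H := ∑ a, S a ∘L P a
  have hRE : ∀ a, R ∘L adjoint (P a) = S a := by
    intro a
    simp only [R, finsetSum_comp, comp_assoc, hPE]
    rw [Finset.sum_eq_single a] <;> simp +contextual [one_def]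
  obtain ⟨x, hx1, hx2, hx3⟩ := tro_sqrt (adjoint R ∘L R)
    ((nonneg_iff_isPositive _).2 (isPositive_adjoint_comp_self R))
  refine ⟨fun c a => P c ∘L x ∘L adjoint (P a), ?_, ?_⟩
  · intro a b
    have e : ∀ c, adjoint (P c ∘L x ∘L adjoint (P a)) * (P c ∘L x ∘L adjoint (P b))
        = (P a ∘L x) ∘L (adjoint (P c) ∘L P c) ∘L (x ∘L adjoint (P b)) := by
      intro c
      simp only [adjoint_comp, adjoint_adjoint, hx1, mul_def, comp_assoc]
    simp only [e]
    rw [← comp_finsetSum, ← finsetSum_comp, hsum]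
    have : (P a ∘L x) ∘L (1 : _ →L[ℂ] _) ∘L (x ∘L adjoint (P b)) = P a ∘L (x * x) ∘L adjoint (P b) := rfl
    rw [this, hx2, comp_assoc, hRE, ← comp_assoc, ← hRE a, adjoint_comp, adjoint_adjoint]
  · intro n hn c a
    let D : PiLp 2 (fun _ : ι => K) →L[ℂ] PiLp 2 (fun _ : ι => K) := ∑ a, adjoint (P a) ∘L n ∘L P a
    have hPD : ∀ a, P a ∘L D = n ∘L P a := by
      intro a
      simp only [D, comp_finsetSum, ← comp_assoc, hPE]
      rw [Finset.sum_eq_single a] <;> simp +contextual [one_def, eq_comm]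
    have hDE : ∀ a, D ∘L adjoint (P a) = adjoint (P a) ∘L n := by
      intro a
      simp only [D, finsetSum_comp, comp_assoc, hPE]
      rw [Finset.sum_eq_single a] <;> simp +contextual [one_def]
    have key : ∀ y : PiLp 2 (fun _ : ι => K) →L[ℂ] PiLp 2 (fun _ : ι => K),
        (∀ a b, P a ∘L y ∘L adjoint (P b) = 0) → y = 0 := by
      intro y hy
      have : y = 1 * y * 1 := by simp
      rw [this, ← hsum]
      simp only [Finset.sum_mul, Finset.mul_sum]
      refine Finset.sum_eq_zero fun a _ => Finset.sum_eq_zero fun b _ => ?_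
      calc _ = adjoint (P b) ∘L (P b ∘L y ∘L adjoint (P a)) ∘L P a := rfl
        _ = 0 := by simp [hy]
    have hc : Commute D (adjoint R ∘L R) := by
      rw [commute_iff_eq, ← sub_eq_zero]
      apply key
      intro a b
      have e1 : P a ∘L (D * (adjoint R ∘L R)) ∘L adjoint (P b) = n * (adjoint (S a) ∘L S b) := by
        rw [← hRE, ← hRE, adjoint_comp, adjoint_adjoint]
        calc _ = (P a ∘L D) ∘L (adjoint R ∘L R) ∘L adjoint (P b) := rfl
          _ = _ := by rw [hPD]; rfl
      have e2 : P a ∘L ((adjoint R ∘L R) * D) ∘L adjoint (P b) = (adjoint (S a) ∘L S b) * n := by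
        rw [← hRE, ← hRE, adjoint_comp, adjoint_adjoint]
        calc _ = P a ∘L (adjoint R ∘L R) ∘L (D ∘L adjoint (P b)) := rfl
          _ = _ := by rw [hDE]; rfl
      rw [sub_comp, comp_sub, e1, e2, sub_eq_zero]
      exact hn a b
    have := hx3 D hc
    rw [commute_iff_eq]
    calc _ = (n ∘L P c) ∘L x ∘L adjoint (P a) := rfl
      _ = P c ∘L (D * x) ∘L adjoint (P a) := by rw [← hPD]; rfl
      _ = (P c ∘L x) ∘L (D ∘L adjoint (P a)) := by rw [this.eq]; rfl
      _ = _ := by rw [hDE]; rfl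

lemma tro_schur_aux {ι : Type*} [Fintype ι] (F : ι → K →L[ℂ] L) (S : ι → K →L[ℂ] H)
    (hc : ∀ a b c d, Commute (adjoint (F a) ∘L F b) (adjoint (S c) ∘L S d)) (k : ι → K) :
    0 ≤ (∑ a, ∑ b,
      inner ℂ (((adjoint (F b) ∘L F a) * (adjoint (S b) ∘L S a)) (k a)) (k b)).re := by
  obtain ⟨x, hx, hx2⟩ := tro_mat_sqrt S
  have h2 : ∑ a, ∑ b, inner ℂ (((adjoint (F b) ∘L F a) * (adjoint (S b) ∘L S a)) (k a)) (k b)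
     = ∑ c, inner ℂ (∑ a, F a (x c a (k a))) (∑ b, F b (x c b (k b))) := by
    simp only [sum_inner, inner_sum]
    rw [Finset.sum_comm]
    symm
    rw [Finset.sum_comm]
    refine Finset.sum_congr rfl fun b _ => ?_
    rw [Finset.sum_comm]
    refine Finset.sum_congr rfl fun a _ => ?_
    rw [← hx b a, Finset.mul_sum, sum_apply, sum_inner]
    refine Finset.sum_congr rfl fun c _ => ?_
    have h3 : Commute (adjoint (F b) ∘L F a) (adjoint (x c b)) := by
      have := congrArg adjoint (hx2 (adjoint (F a) ∘L F b) (fun _ _ => hc _ _ _ _) c b).eq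
      simp only [mul_def, adjoint_comp, adjoint_adjoint] at this
      exact this.symm
    have h4 := hx2 (adjoint (F b) ∘L F a) (fun _ _ => hc _ _ _ _) c a
    rw [← mul_assoc, h3.eq]
    simp only [mul_def, coe_comp, Function.comp_apply, adjoint_inner_left]
  rw [h2, Complex.re_sum]
  exact Finset.sum_nonneg fun c _ => inner_self_nonneg (𝕜 := ℂ)

lemma tro_schur {ι : Type*} (s : Finset ι) (F : ι → K →L[ℂ] L) (S : ι → K →L[ℂ] H)
    (hc : ∀ a b c d, Commute (adjoint (F a) ∘L F b) (adjoint (S c) ∘L S d)) (k : ι → K) :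
    0 ≤ (∑ a ∈ s, ∑ b ∈ s,
      inner ℂ (((adjoint (F b) ∘L F a) * (adjoint (S b) ∘L S a)) (k a)) (k b)).re := by
  have := tro_schur_aux (fun i : s => F i) (fun i : s => S i) (fun _ _ _ _ => hc _ _ _ _)
    (fun i : s => k i)
  simpa only [← Finset.sum_coe_sort s] using this

lemma tro_zero {G Y : Type*} [NormedAddCommGroup G] [InnerProductSpace ℂ G] [CompleteSpace G]
    (S : Y → K →L[ℂ] H) (D : H →L[ℂ] G) (h1 : ∀ y, D ∘L S y = 0)
    (h2 : ∀ h, (∀ y, adjoint (S y) h = 0) → D h = 0) : D = 0 := by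
  have : adjoint D = 0 := by
    ext g
    have h3 : D (adjoint D g) = 0 := by
      apply h2
      intro y
      have := congrArg adjoint (h1 y)
      rw [adjoint_comp, map_zero] at this
      exact congrArg (fun f => f g) this
    have h4 : inner ℂ (adjoint D g) (adjoint D g) = (0 : ℂ) := by
      rw [adjoint_inner_left, h3, inner_zero_right]
    simpa using h4
  simpa using congrArg adjoint this

lemma tro_ext {G Y : Type*} [NormedAddCommGroup G] [InnerProductSpace ℂ G] [CompleteSpace G]
    (S : Y → K →L[ℂ] H) (T : Y → K →L[ℂ] G) (C : ℝ)
    (hC : ∀ (s : Finset Y) (k : Y → K), ‖∑ y ∈ s, T y (k y)‖ ≤ C * ‖∑ y ∈ s, S y (k y)‖) :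
    ∃ A : H →L[ℂ] G, (∀ y, A ∘L S y = T y) ∧ ∀ h, (∀ y, adjoint (S y) h = 0) → A h = 0 := by
  classical
  let S' : (Y →₀ K) →ₗ[ℂ] H := Finsupp.lsum ℂ (fun y => (S y : K →ₗ[ℂ] H))
  let T' : (Y →₀ K) →ₗ[ℂ] G := Finsupp.lsum ℂ (fun y => (T y : K →ₗ[ℂ] G))
  let W : Submodule ℂ H := (LinearMap.range S').topologicalClosure
  have hmem : ∀ f, S' f ∈ W := fun f => Submodule.le_topologicalClosure _ ⟨f, rfl⟩
  let e : (Y →₀ K) →ₗ[ℂ] W := S'.codRestrict W hmem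
  have : CompleteSpace W := (Submodule.isClosed_topologicalClosure _).completeSpace_coe
  have hd : DenseRange e := by
    intro w
    rw [Metric.mem_closure_iff]
    intro ε hε
    obtain ⟨z, ⟨f, hf⟩, hz⟩ := Metric.mem_closure_iff.1 w.2 ε hε
    refine ⟨e f, ⟨f, rfl⟩, ?_⟩
    subst hf
    exact hz
  have hn : ∀ f, ‖T' f‖ ≤ C * ‖e f‖ := by
    intro f
    exact hC f.support f
  refine ⟨(T'.extendOfNorm e) ∘L W.orthogonalProjectionOnto, ?_, ?_⟩
  · intro y
    ext k
    have h1 : S y k = (e (Finsupp.single y k) : H) := by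
      simp [e, S']
    have h2 : T y k = T' (Finsupp.single y k) := by simp [T']
    simp only [coe_comp, Function.comp_apply]
    rw [h1, Submodule.orthogonalProjectionOnto_mem_subspace_eq_self,
      LinearMap.extendOfNorm_eq hd ⟨C, hn⟩, h2]
  · intro h hh
    have : W.orthogonalProjectionOnto h = 0 := by
      rw [Submodule.orthogonalProjectionOnto_eq_zero_iff, Submodule.orthogonal_closure]
      rw [Submodule.mem_orthogonal]
      rintro _ ⟨f, rfl⟩
      simp only [S', Finsupp.lsum_apply, Finsupp.sum, sum_inner]
      refine Finset.sum_eq_zero fun y _ => ?_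
      have := adjoint_inner_right (S y) (f y) h
      rw [hh, inner_zero_right] at this
      exact this.symm
    simp [this]

end aux

lemma tro_re {E : Type*} [NormedAddCommGroup E] [InnerProductSpace ℂ E] (z : E) :
    (inner ℂ z z).re = ‖z‖ ^ 2 := inner_self_eq_norm_sq (𝕜 := ℂ) z

section aux2
variable {K L H : Type*} 
    [NormedAddCommGroup L] [InnerProductSpace ℂ L] [CompleteSpace L]
    [NormedAddCommGroup H] [InnerProductSpace ℂ H] [CompleteSpace H]
lemma tro_gram {X Y K : Type u}
    [NormedAddCommGroup K] [InnerProductSpace ℂ K] [CompleteSpace K]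
    (F : X → K →L[ℂ] L) (S : Y → K →L[ℂ] H)
    (hc : ∀ a b c d, Commute (adjoint (F a) ∘L F b) (adjoint (S c) ∘L S d)) :
    ∃ (G : HilbertC.{u}) (T : X → Y → K →L[ℂ] G.carrier),
      (∀ x y x' y', adjoint (T x y) ∘L T x' y' =
        (adjoint (F x) ∘L F x') * (adjoint (S y) ∘L S y')) ∧
      ∀ g, (∀ x y, adjoint (T x y) g = 0) → g = 0 := by
  let M : Matrix (X × Y) (X × Y) (K →L[ℂ] K) := Matrix.of fun p q =>
    (adjoint (F p.1) ∘L F q.1) * (adjoint (S p.2) ∘L S q.2)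
  have hM : M.PosSemidef := by
    have htf := (RKHS.posSemidef_tfae (K := M)).out 0 2
    refine htf.2 ⟨?_, ?_⟩
    · ext1 p q
      rw [Matrix.conjTranspose_apply]
      simp only [M, Matrix.of_apply, star_mul]
      rw [(hc _ _ _ _).eq]
      simp only [star_eq_adjoint, adjoint_comp, adjoint_adjoint]
    · intro vv
      exact tro_schur vv.support (fun p : X × Y => F p.1) (fun p => S p.2)
        (fun _ _ _ _ => hc _ _ _ _) vv
  have : Fact M.PosSemidef := ⟨hM⟩
  refine ⟨⟨RKHS.OfKernel M⟩, fun x y => RKHS.kerFun (RKHS.OfKernel M) (x, y), ?_, ?_⟩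
  · intro x y x' y'
    have := RKHS.kernel_apply (RKHS.OfKernel M) (x, y) (x', y')
    rw [← this, RKHS.OfKernel.kernel_ofKernel]
    rfl
  · intro g hg
    apply RKHS.ext
    rintro ⟨x, y⟩
    rw [← RKHS.adjoint_kerFun]
    simpa using hg x y

lemma tro_A {X Y K G : Type*}
    [NormedAddCommGroup K] [InnerProductSpace ℂ K] [CompleteSpace K]
    [NormedAddCommGroup G] [InnerProductSpace ℂ G] [CompleteSpace G]
    (F : X → K →L[ℂ] L) (S : Y → K →L[ℂ] H) (T : X → Y → K →L[ℂ] G)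
    (hc : ∀ a b c d, Commute (adjoint (F a) ∘L F b) (adjoint (S c) ∘L S d))
    (hT : ∀ x y x' y', adjoint (T x y) ∘L T x' y' =
        (adjoint (F x) ∘L F x') * (adjoint (S y) ∘L S y')) :
    ∃ A : X → H →L[ℂ] G, (∀ x y, A x ∘L S y = T x y) ∧
      ∀ x h, (∀ y, adjoint (S y) h = 0) → A x h = 0 := by
  have : ∀ x, ∃ A : H →L[ℂ] G, (∀ y, A ∘L S y = T x y) ∧
      ∀ h, (∀ y, adjoint (S y) h = 0) → A h = 0 := by
    intro x
    apply tro_ext S (T x) ‖F x‖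
    intro s k
    set c : ℝ := ‖F x‖
    let N : K →L[ℂ] K := ((c ^ 2 : ℝ) : ℂ) • 1 - adjoint (F x) ∘L F x
    have hN : 0 ≤ N := by
      rw [nonneg_iff_isPositive, isPositive_def']
      refine ⟨?_, ?_⟩
      · rw [IsSelfAdjoint, star_eq_adjoint]
        simp only [N, map_sub, map_smulₛₗ, adjoint_comp, adjoint_adjoint, Complex.conj_ofReal,
          one_def, adjoint_id]
      · intro k
        have hk : N.reApplyInnerSelf k = c ^ 2 * ‖k‖ ^ 2 - ‖F x k‖ ^ 2 := by
          rw [reApplyInnerSelf_apply]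
          simp only [N, sub_apply, smul_apply, one_apply_eq_self, inner_sub_left,
            coe_comp, Function.comp_apply, adjoint_inner_left, inner_smul_left, map_sub,
            Complex.conj_ofReal]
          rw [← tro_re k, ← tro_re (F x k), ← Complex.re_ofReal_mul]
          rfl
        have := (F x).le_opNorm k
        have h2 : ‖F x k‖ ^ 2 ≤ c ^ 2 * ‖k‖ ^ 2 := by
          rw [← mul_pow]; gcongr
        rw [hk]
        linarith
    obtain ⟨e, he1, he2, he3⟩ := tro_sqrt N hN
    have hcomm : ∀ a b, Commute (adjoint (S a) ∘L S b) e := by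
      intro a b
      apply he3
      apply Commute.sub_right
      · exact (Commute.one_right _).smul_right _
      · exact (hc _ _ _ _).symm
    have hsq : ∀ k : Y → K, inner ℂ (∑ y ∈ s, S y (k y)) (∑ y ∈ s, S y (k y)) =
        ∑ b ∈ s, ∑ a ∈ s, inner ℂ (k a) ((adjoint (S a) ∘L S b) (k b)) := by
      intro k
      simp only [sum_inner, inner_sum, coe_comp, Function.comp_apply, adjoint_inner_right]
    have hsqT : inner ℂ (∑ y ∈ s, T x y (k y)) (∑ y ∈ s, T x y (k y)) =
        ∑ b ∈ s, ∑ a ∈ s, inner ℂ (k a) (((adjoint (F x) ∘L F x) * (adjoint (S a) ∘L S b)) (k b)) := by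
      simp only [← hT, sum_inner, inner_sum, coe_comp, Function.comp_apply, adjoint_inner_right]
    have hE : inner ℂ (∑ y ∈ s, S y (e (k y))) (∑ y ∈ s, S y (e (k y))) =
       ((c ^ 2 : ℝ) : ℂ) * inner ℂ (∑ y ∈ s, S y (k y)) (∑ y ∈ s, S y (k y)) -
       inner ℂ (∑ y ∈ s, T x y (k y)) (∑ y ∈ s, T x y (k y)) := by
      rw [hsqT, hsq k, hsq (fun y => e (k y))]
      simp only [Finset.mul_sum, ← Finset.sum_sub_distrib]
      refine Finset.sum_congr rfl fun b _ => Finset.sum_congr rfl fun a _ => ?_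
      have h1 : (adjoint (S a) ∘L S b) (e (k b)) = e ((adjoint (S a) ∘L S b) (k b)) :=
        congrArg (fun f => f (k b)) (hcomm a b).eq
      rw [h1, ← adjoint_inner_right, he1]
      have h2 : ∀ z, e (e z) = N z := fun z => congrArg (fun f => f z) he2
      rw [h2]
      simp [N, inner_sub_right, inner_smul_right]
    have h0 := sq_nonneg ‖∑ y ∈ s, S y (e (k y))‖
    refine le_of_sq_le_sq ?_ (by positivity)
    rw [mul_pow]
    have : ‖∑ y ∈ s, S y (e (k y))‖ ^ 2 = c ^ 2 * ‖∑ y ∈ s, S y (k y)‖ ^ 2 - ‖∑ y ∈ s, T x y (k y)‖ ^ 2 := by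
      have := congrArg Complex.re hE
      rwa [Complex.sub_re, Complex.re_ofReal_mul, tro_re, tro_re, tro_re] at this
    linarith
  choose A h1 h2 using this
  exact ⟨A, h1, h2⟩

section fam
variable {X Y K G : Type*}
    [NormedAddCommGroup K] [InnerProductSpace ℂ K] [CompleteSpace K]
    [NormedAddCommGroup G] [InnerProductSpace ℂ G] [CompleteSpace G]
    (F : X → K →L[ℂ] L) (S : Y → K →L[ℂ] H) (T : X → Y → K →L[ℂ] G)
    (hc : ∀ a b c d, Commute (adjoint (F a) ∘L F b) (adjoint (S c) ∘L S d))
    (hT : ∀ x y x' y', adjoint (T x y) ∘L T x' y' =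
        (adjoint (F x) ∘L F x') * (adjoint (S y) ∘L S y'))
    (hd : ∀ g, (∀ x y, adjoint (T x y) g = 0) → g = 0)
    (A : X → H →L[ℂ] G) (hA : ∀ x y, A x ∘L S y = T x y)
    (hA0 : ∀ x h, (∀ y, adjoint (S y) h = 0) → A x h = 0)

include hT hA hA0 in
lemma tro_f1 (r t : X) (y : Y) :
    adjoint (T r y) ∘L A t = (adjoint (F r) ∘L F t) ∘L adjoint (S y) := by
  rw [← sub_eq_zero]
  apply tro_zero S
  · intro y'
    rw [sub_comp, comp_assoc, hA, hT, sub_eq_zero]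
    rfl
  · intro h hh
    simp [hA0 t h hh, hh]

include hT hA hA0 in
lemma tro_f1' (r t : X) (y : Y) :
    adjoint (A t) ∘L T r y = S y ∘L (adjoint (F t) ∘L F r) := by
  have := congrArg adjoint (tro_f1 F S T hT A hA hA0 r t y)
  simpa only [adjoint_comp, adjoint_adjoint] using this

include hd in
lemma tro_dense (f g : K →L[ℂ] G) (h : ∀ x y, adjoint (T x y) ∘L f = adjoint (T x y) ∘L g) :
    f = g := by
  ext k
  rw [← sub_eq_zero]
  apply hd
  intro x y
  rw [map_sub, sub_eq_zero]
  exact congrArg (fun f => f k) (h x y)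

include hT hd hA hA0 in
lemma tro_f2 (x x₁ x₂ : X) (a b : ℂ) (h : F x = a • F x₁ + b • F x₂) :
    A x = a • A x₁ + b • A x₂ := by
  rw [← sub_eq_zero]
  apply tro_zero S
  · intro y
    rw [sub_comp, add_comp, smul_comp, smul_comp, hA, hA, hA, sub_eq_zero]
    apply tro_dense T hd
    intro x' y'
    rw [comp_add, comp_smul, comp_smul, hT, hT, hT, h]
    simp only [comp_add, comp_smul, add_mul, smul_mul_assoc]
  · intro k hk
    simp [hA0 _ k hk]

include hc hT hd hA hA0 in
lemma tro_f3 (w s t r : X) (h : F w = F s ∘L adjoint (F t) ∘L F r) :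
    A w = A s ∘L adjoint (A t) ∘L A r := by
  rw [← sub_eq_zero]
  apply tro_zero S
  · intro y
    rw [sub_comp, sub_eq_zero]
    simp only [comp_assoc]
    rw [hA, hA, tro_f1' F S T hT A hA hA0, ← comp_assoc, hA]
    apply tro_dense T hd
    intro x' y'
    rw [← comp_assoc, hT, hT, h]
    have e := (hc t r y' y).eq
    calc _ = (adjoint (F x') ∘L F s) * ((adjoint (F t) ∘L F r) * (adjoint (S y') ∘L S y)) := rfl
      _ = _ := by rw [e]; rfl
  · intro k hk
    simp [hA0 _ k hk]

end fam

lemma tro_block2 (A B : Type u)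
    [NormedAddCommGroup A] [InnerProductSpace ℂ A] [CompleteSpace A]
    [NormedAddCommGroup B] [InnerProductSpace ℂ B] [CompleteSpace B] :
    ∃ (P : HilbertC.{u}) (i : A →L[ℂ] P.carrier) (j : B →L[ℂ] P.carrier),
      (∀ a, adjoint i (i a) = a) ∧ (∀ b, adjoint j (j b) = b) ∧
      (∀ b, adjoint i (j b) = 0) ∧ (∀ a, adjoint j (i a) = 0) := by
  let p : WithLp 2 (A × B) →L[ℂ] A := WithLp.fstL 2 ℂ A B
  let q : WithLp 2 (A × B) →L[ℂ] B := WithLp.sndL 2 ℂ A B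
  have hp : ∀ a, adjoint p a = WithLp.toLp 2 (a, 0) := by
    intro a
    refine ext_inner_left ℂ fun z => ?_
    rw [adjoint_inner_right]
    simp [p]
  have hq : ∀ b, adjoint q b = WithLp.toLp 2 (0, b) := by
    intro a
    refine ext_inner_left ℂ fun z => ?_
    rw [adjoint_inner_right]
    simp [q]
  refine ⟨⟨WithLp 2 (A × B)⟩, adjoint p, adjoint q, ?_, ?_, ?_, ?_⟩ <;> intro z <;>
    simp only [adjoint_adjoint, hp, hq] <;> simp [p, q]

lemma tro_norm_le {A B : Type*}
    [NormedAddCommGroup A] [InnerProductSpace ℂ A] [CompleteSpace A]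
    [NormedAddCommGroup B] [InnerProductSpace ℂ B] [CompleteSpace B]
    (i : A →L[ℂ] B) (h : ∀ a, adjoint i (i a) = a) : ‖i‖ ≤ 1 := by
  refine opNorm_le_bound _ zero_le_one fun a => ?_
  rw [one_mul]
  have : ‖i a‖ ^ 2 = ‖a‖ ^ 2 := by
    rw [← tro_re, ← tro_re, ← adjoint_inner_right, h]
  exact le_of_sq_le_sq this.le (norm_nonneg _)

lemma tro_block4 (A B C D : Type u)
    [NormedAddCommGroup A] [InnerProductSpace ℂ A] [CompleteSpace A]
    [NormedAddCommGroup B] [InnerProductSpace ℂ B] [CompleteSpace B]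
    [NormedAddCommGroup C] [InnerProductSpace ℂ C] [CompleteSpace C]
    [NormedAddCommGroup D] [InnerProductSpace ℂ D] [CompleteSpace D] :
    ∃ (P : HilbertC.{u}) (a : A →L[ℂ] P.carrier) (b : B →L[ℂ] P.carrier)
      (c : C →L[ℂ] P.carrier) (d : D →L[ℂ] P.carrier),
      ((∀ z, adjoint a (a z) = z) ∧ (∀ z, adjoint b (b z) = z) ∧
      (∀ z, adjoint c (c z) = z) ∧ (∀ z, adjoint d (d z) = z)) ∧
      ((∀ z, adjoint a (b z) = 0) ∧ (∀ z, adjoint a (c z) = 0) ∧ (∀ z, adjoint a (d z) = 0)) ∧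
      ((∀ z, adjoint b (a z) = 0) ∧ (∀ z, adjoint b (c z) = 0) ∧ (∀ z, adjoint b (d z) = 0)) ∧
      ((∀ z, adjoint c (a z) = 0) ∧ (∀ z, adjoint c (b z) = 0) ∧ (∀ z, adjoint c (d z) = 0)) ∧
      ((∀ z, adjoint d (a z) = 0) ∧ (∀ z, adjoint d (b z) = 0) ∧ (∀ z, adjoint d (c z) = 0)) := by
  obtain ⟨P, a, b, h1, h2, h3, h4⟩ := tro_block2 A B
  obtain ⟨Q, c, d, k1, k2, k3, k4⟩ := tro_block2 C D
  obtain ⟨R, p, q, l1, l2, l3, l4⟩ := tro_block2 P.carrier Q.carrier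
  refine ⟨R, p ∘L a, p ∘L b, q ∘L c, q ∘L d, ?_⟩
  simp [adjoint_comp, h1, h2, h3, h4, k1, k2, k3, k4, l1, l2, l3, l4]
end aux2

set_option linter.unusedSimpArgs false in
set_option maxHeartbeats 4000000 in
lemma tro_main {K₁ L₁ H₂ K₂ : Type u}
    [NormedAddCommGroup K₁] [InnerProductSpace ℂ K₁] [CompleteSpace K₁]
    [NormedAddCommGroup L₁] [InnerProductSpace ℂ L₁] [CompleteSpace L₁]
    [NormedAddCommGroup H₂] [InnerProductSpace ℂ H₂] [CompleteSpace H₂]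
    [NormedAddCommGroup K₂] [InnerProductSpace ℂ K₂] [CompleteSpace K₂]
    (𝒰 : Submodule ℂ (K₁ →L[ℂ] L₁)) (𝒱 : Submodule ℂ (H₂ →L[ℂ] K₂))
    {H K L : Type u}
    [NormedAddCommGroup H] [InnerProductSpace ℂ H] [CompleteSpace H]
    [NormedAddCommGroup K] [InnerProductSpace ℂ K] [CompleteSpace K]
    [NormedAddCommGroup L] [InnerProductSpace ℂ L] [CompleteSpace L]
    (φ : ↥𝒰 →ₗ[ℂ] (K →L[ℂ] L)) (ψ : ↥𝒱 →ₗ[ℂ] (H →L[ℂ] K))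
    (hφ : IsTernaryHom 𝒰 φ) (hψ : IsTernaryHom 𝒱 ψ)
    (hc : ∀ (u₁ u₂ : 𝒰) (v₁ v₂ : 𝒱),
          Commute ((adjoint (φ u₁)) ∘L (φ u₂)) ((ψ v₁) ∘L (adjoint (ψ v₂))))
    (n : ℕ) (u : Fin n → 𝒰) (v : Fin n → 𝒱) :
    ∃ (ℍ : HilbertC.{u})
        (φ' : ↥𝒰 →ₗ[ℂ] (ℍ.carrier →L[ℂ] ℍ.carrier))
        (ψ' : ↥𝒱 →ₗ[ℂ] (ℍ.carrier →L[ℂ] ℍ.carrier)),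
        IsTernaryHom 𝒰 φ' ∧ IsTernaryHom 𝒱 ψ' ∧
        (∀ (a : 𝒰) (b : 𝒱), Commute (φ' a) (ψ' b)) ∧
        (∀ (a : 𝒰) (b : 𝒱), Commute (φ' a) (adjoint (ψ' b))) ∧
        ‖∑ i, (φ (u i)) ∘L (ψ (v i))‖ = ‖∑ i, (φ' (u i)) * (ψ' (v i))‖ := by
  let F : 𝒰 → K →L[ℂ] L := fun x => φ x
  let S : 𝒱 → K →L[ℂ] H := fun y => adjoint (ψ y)
  have hS : ∀ y, adjoint (S y) = ψ y := fun y => adjoint_adjoint _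
  have hc' : ∀ a b c d, Commute (adjoint (F a) ∘L F b) (adjoint (S c) ∘L S d) := by
    intro a b c d
    rw [hS]
    exact hc a b c d
  obtain ⟨G, T, hT, hd⟩ := tro_gram F S hc'
  have hTs : ∀ y x y' x', adjoint (T x y) ∘L T x' y' =
        (adjoint (S y) ∘L S y') * (adjoint (F x) ∘L F x') := by
    intro y x y' x'
    rw [hT, (hc' _ _ _ _).eq]
  have hds : ∀ g, (∀ y x, adjoint (T x y) g = 0) → g = 0 := fun g h => hd g fun x y => h y x
  have hcs : ∀ a b c d, Commute (adjoint (S a) ∘L S b) (adjoint (F c) ∘L F d) :=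
    fun a b c d => (hc' c d a b).symm
  obtain ⟨A, hA, hA0⟩ := tro_A F S T hc' hT
  obtain ⟨C, hC, hC0⟩ := tro_A S F (fun y x => T x y) hcs hTs
  have hCA : ∀ x y, adjoint (C y) ∘L A x = φ x ∘L ψ y := by
    intro x y
    rw [← sub_eq_zero]
    apply tro_zero S
    · intro y'
      rw [sub_comp, comp_assoc, hA, sub_eq_zero,
        tro_f1' S F (fun y x => T x y) hTs C hC hC0, hS, comp_assoc]
    · intro h hh
      have := hh y
      rw [hS] at this
      simp [hA0 x h hh, this]
  have hAC : ∀ x y, A x ∘L S y = C y ∘L F x := fun x y => (hA x y).trans (hC y x).symm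
  have hAlin : ∀ (x x₁ x₂ : 𝒰) (a b : ℂ), x = a • x₁ + b • x₂ → A x = a • A x₁ + b • A x₂ := by
    intro x x₁ x₂ a b h
    apply tro_f2 F S T hT hd A hA hA0
    simp [F, h]
  have hClin : ∀ (x x₁ x₂ : 𝒱) (a b : ℂ), x = a • x₁ + b • x₂ →
      adjoint (C x) = a • adjoint (C x₁) + b • adjoint (C x₂) := by
    intro x x₁ x₂ a b h
    have := tro_f2 S F (fun y x => T x y) hTs hds C hC hC0 x x₁ x₂ (star a) (star b)
      (by simp only [S, h, map_add, map_smul, map_smulₛₗ]; rfl)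
    rw [this]
    simp only [map_add, map_smulₛₗ]
    simp
  obtain ⟨P, iK, iL, iH, iG, ⟨a1, a2, a3, a4⟩, ⟨b1, b2, b3⟩, ⟨c1, c2, c3⟩, ⟨d1, d2, d3⟩,
    ⟨e1, e2, e3⟩⟩ := tro_block4 K L H G.carrier
  let φ' : ↥𝒰 →ₗ[ℂ] (P.carrier →L[ℂ] P.carrier) :=
    { toFun := fun x => iL ∘L φ x ∘L adjoint iK + iG ∘L A x ∘L adjoint iH
      map_add' := by
        intro x y
        rw [hAlin (x + y) x y 1 1 (by simp)]
        ext z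
        simp
        abel
      map_smul' := by
        intro m x
        rw [hAlin (m • x) x 0 m 0 (by simp)]
        ext z
        simp }
  let ψ' : ↥𝒱 →ₗ[ℂ] (P.carrier →L[ℂ] P.carrier) :=
    { toFun := fun y => iK ∘L ψ y ∘L adjoint iH + iL ∘L adjoint (C y) ∘L adjoint iG
      map_add' := by
        intro x y
        rw [hClin (x + y) x y 1 1 (by simp)]
        ext z
        simp
        abel
      map_smul' := by
        intro m x
        rw [hClin (m • x) x 0 m 0 (by simp)]
        ext z
        simp }
  have hφ' : ∀ x, φ' x = iL ∘L φ x ∘L adjoint iK + iG ∘L A x ∘L adjoint iH := fun _ => rfl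
  have hψ' : ∀ y, ψ' y = iK ∘L ψ y ∘L adjoint iH + iL ∘L adjoint (C y) ∘L adjoint iG :=
    fun _ => rfl
  have hφs : ∀ x, adjoint (φ' x) = iK ∘L adjoint (φ x) ∘L adjoint iL
      + iH ∘L adjoint (A x) ∘L adjoint iG := by
    intro x
    simp only [hφ', map_add, adjoint_comp, adjoint_adjoint, comp_assoc]
  have hψs : ∀ y, adjoint (ψ' y) = iH ∘L S y ∘L adjoint iK + iG ∘L C y ∘L adjoint iL := by
    intro x
    simp only [hψ', map_add, adjoint_comp, adjoint_adjoint, comp_assoc, S]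
  have hprod : ∀ x y, φ' x * ψ' y = iL ∘L (φ x ∘L ψ y) ∘L adjoint iH := by
    intro x y
    rw [hφ', hψ']
    ext z
    simp [a1, a2, a3, a4, b1, b2, b3, c1, c2, c3, d1, d2, d3, e1, e2, e3]
  refine ⟨P, φ', ψ', ?_, ?_, ?_, ?_, ?_⟩
  · intro s t r h
    have h1 := hφ s t r h
    have h2 := tro_f3 F S T hc' hT hd A hA hA0 _ s t r h1
    rw [hφ', h1, h2, hφ' s, hφs, hφ' r]
    ext z
    simp [a1, a2, a3, a4, b1, b2, b3, c1, c2, c3, d1, d2, d3, e1, e2, e3]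
  · intro s t r h
    have h1 := hψ s t r h
    have h2 := tro_f3 S F (fun y x => T x y) hcs hTs hds C hC hC0 ⟨_, h⟩ r t s (by
      simp only [S, h1, adjoint_comp, adjoint_adjoint, comp_assoc])
    rw [hψ', h1, h2, hψ' s, hψs, hψ' r]
    ext z
    simp [a1, a2, a3, a4, b1, b2, b3, c1, c2, c3, d1, d2, d3, e1, e2, e3, adjoint_comp, S]
  · intro x y
    rw [commute_iff_eq, hprod, ← hCA, hφ', hψ']
    ext z
    simp [a1, a2, a3, a4, b1, b2, b3, c1, c2, c3, d1, d2, d3, e1, e2, e3]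
  · intro x y
    have h0 : ∀ k, A x (S y k) = C y (φ x k) := fun k => congrArg (fun f => f k) (hAC x y)
    rw [commute_iff_eq, hφ', hψs]
    ext z
    simp [a1, a2, a3, a4, b1, b2, b3, c1, c2, c3, d1, d2, d3, e1, e2, e3, h0]
  · simp only [hprod]
    rw [← comp_finsetSum, ← finsetSum_comp]
    set Z := ∑ i, φ (u i) ∘L ψ (v i)
    have nL := tro_norm_le iL a2
    have nH := tro_norm_le iH a3
    have nL' : ‖adjoint iL‖ ≤ 1 := by rwa [LinearIsometryEquiv.norm_map]
    have nH' : ‖adjoint iH‖ ≤ 1 := by rwa [LinearIsometryEquiv.norm_map]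
    have gen : ∀ {E₁ E₂ E₃ E₄ : Type u} [NormedAddCommGroup E₁] [NormedSpace ℂ E₁]
        [NormedAddCommGroup E₂] [NormedSpace ℂ E₂] [NormedAddCommGroup E₃] [NormedSpace ℂ E₃]
        [NormedAddCommGroup E₄] [NormedSpace ℂ E₄] (p : E₃ →L[ℂ] E₄) (f : E₂ →L[ℂ] E₃)
        (q : E₁ →L[ℂ] E₂), ‖p‖ ≤ 1 → ‖q‖ ≤ 1 → ‖p ∘L f ∘L q‖ ≤ ‖f‖ := by
      intros _ _ _ _ _ _ _ _ _ _ _ _ p f q hp hq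
      calc _ ≤ ‖p‖ * ‖f ∘L q‖ := opNorm_comp_le _ _
        _ ≤ 1 * (‖f‖ * 1) := by
          gcongr
          exact (opNorm_comp_le _ _).trans (by gcongr)
        _ = _ := by ring
    apply le_antisymm
    · have : Z = adjoint iL ∘L (iL ∘L Z ∘L adjoint iH) ∘L iH := by
        ext z
        simp [a2, a3]
      calc ‖Z‖ = ‖adjoint iL ∘L (iL ∘L Z ∘L adjoint iH) ∘L iH‖ := by rw [← this]
        _ ≤ _ := gen _ _ _ nL' nH
    · exact gen _ _ _ nL nH'


/-- The maximal tensor norm of TROs defined via semi-commuting pairs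
of ternary morphisms coincides with the one defined via commuting pairs. -/
theorem statement5
    {K₁ L₁ H₂ K₂ : Type u}
    [NormedAddCommGroup K₁] [InnerProductSpace ℂ K₁] [CompleteSpace K₁]
    [NormedAddCommGroup L₁] [InnerProductSpace ℂ L₁] [CompleteSpace L₁]
    [NormedAddCommGroup H₂] [InnerProductSpace ℂ H₂] [CompleteSpace H₂]
    [NormedAddCommGroup K₂] [InnerProductSpace ℂ K₂] [CompleteSpace K₂]
    (𝒰 : Submodule ℂ (K₁ →L[ℂ] L₁)) (𝒱 : Submodule ℂ (H₂ →L[ℂ] K₂))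
    (h𝒰closed : IsClosed (𝒰 : Set (K₁ →L[ℂ] L₁)))
    (h𝒱closed : IsClosed (𝒱 : Set (H₂ →L[ℂ] K₂)))
    (h𝒰tro : ∀ S ∈ 𝒰, ∀ T ∈ 𝒰, ∀ R ∈ 𝒰, S ∘L (adjoint T) ∘L R ∈ 𝒰)
    (h𝒱tro : ∀ S ∈ 𝒱, ∀ T ∈ 𝒱, ∀ R ∈ 𝒱, S ∘L (adjoint T) ∘L R ∈ 𝒱)
    (n : ℕ) (u : Fin n → 𝒰) (v : Fin n → 𝒱) :
    sSup {r : ℝ | ∃ (ℍ 𝕂 𝕃 : HilbertC.{u})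
        (φ : ↥𝒰 →ₗ[ℂ] (𝕂.carrier →L[ℂ] 𝕃.carrier))
        (ψ : ↥𝒱 →ₗ[ℂ] (ℍ.carrier →L[ℂ] 𝕂.carrier)),
        IsTernaryHom 𝒰 φ ∧ IsTernaryHom 𝒱 ψ ∧
        (∀ (u₁ u₂ : 𝒰) (v₁ v₂ : 𝒱),
          Commute ((adjoint (φ u₁)) ∘L (φ u₂)) ((ψ v₁) ∘L (adjoint (ψ v₂)))) ∧
        r = ‖∑ i, (φ (u i)) ∘L (ψ (v i))‖}
    = sSup {r : ℝ | ∃ (ℍ : HilbertC.{u})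
        (φ' : ↥𝒰 →ₗ[ℂ] (ℍ.carrier →L[ℂ] ℍ.carrier))
        (ψ' : ↥𝒱 →ₗ[ℂ] (ℍ.carrier →L[ℂ] ℍ.carrier)),
        IsTernaryHom 𝒰 φ' ∧ IsTernaryHom 𝒱 ψ' ∧
        (∀ (a : 𝒰) (b : 𝒱), Commute (φ' a) (ψ' b)) ∧
        (∀ (a : 𝒰) (b : 𝒱), Commute (φ' a) (adjoint (ψ' b))) ∧
        r = ‖∑ i, (φ' (u i)) * (ψ' (v i))‖} := by
  congr 1
  ext r
  constructor
  · rintro ⟨ℍ, 𝕂, 𝕃, φ, ψ, hφ, hψ, hc, rfl⟩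
    exact tro_main 𝒰 𝒱 φ ψ hφ hψ hc n u v
  · rintro ⟨ℍ, φ', ψ', hφ, hψ, h1, h2, rfl⟩
    refine ⟨ℍ, ℍ, ℍ, φ', ψ', hφ, hψ, ?_, rfl⟩
    intro u₁ u₂ v₁ v₂
    have h3 : Commute (adjoint (φ' u₁)) (ψ' v₁) := by
      have := congrArg adjoint (h2 u₁ v₁).eq
      simp only [mul_def, adjoint_comp, adjoint_adjoint] at this
      exact this.symm
    have h4 : Commute (adjoint (φ' u₁)) (adjoint (ψ' v₂)) := by
      have := congrArg adjoint (h1 u₁ v₂).eq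
      simp only [mul_def, adjoint_comp] at this
      exact this.symm
    exact (h3.mul_right h4).mul_left ((h1 u₂ v₁).mul_right (h2 u₂ v₂))
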